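/- arXiv:2004.13231 — 3 statements merged into one kernel-verified Lean document; each statement's English description precedes it below -/
import Mathlib

section
/- For every total Boolean function f : {0,1}^n → {0,1}, the spectral sensitivity is at most the geometric mean of the 0-sensitivity and the 1-sensitivity: λ(f) ≤ √(s₀(f)·s₁(f)). -/
/-!
The argument is the Schur test. Write `A` for the adjacency matrix of the sensitivity graph and
`s b` for `sensB f b`. The row of `A` at `x` sums to at most `s (f x)`, so Cauchy–Schwarz gives
`(A v)ₓ² ≤ s (f x) ∑ y, A x y * v y ^ 2`. Summing over `x` and exchanging the sums, the coefficient
of `v y ^ 2` is `∑ x, A x y * s (f x)`. Every edge joins inputs with different values, so here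
`s (f x) = s (!f y)` factors out, and the column sum is at most `s (f y)` by symmetry of `A`. The
coefficient is thus at most `s (!f y) * s (f y) = s 0 * s 1`, whatever `f y` is.
-/

/-- Flip bit `i` of the Boolean string `x`. -/
def flipBit {n : ℕ} (x : Fin n → Bool) (i : Fin n) : Fin n → Bool :=
  Function.update x i (!x i)

/-- Sensitivity of `f` at input `x`. -/
def sensAt {n : ℕ} (f : (Fin n → Bool) → Bool) (x : Fin n → Bool) : ℕ :=
  (Finset.univ.filter fun i : Fin n => f (flipBit x i) ≠ f x).card

/-- (Maximum) sensitivity of `f`. -/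
def sens {n : ℕ} (f : (Fin n → Bool) → Bool) : ℕ :=
  Finset.univ.sup (sensAt f)

/-- `b`-sensitivity of `f`: max sensitivity over inputs with value `b` (0 if none). -/
def sensB {n : ℕ} (f : (Fin n → Bool) → Bool) (b : Bool) : ℕ :=
  (Finset.univ.filter fun x => f x = b).sup (sensAt f)

/-- Adjacency matrix of the sensitivity graph of `f`. -/
def adjMat {n : ℕ} (f : (Fin n → Bool) → Bool) :
    Matrix (Fin n → Bool) (Fin n → Bool) ℝ :=
  fun x y => if (∃ i, y = flipBit x i) ∧ f x ≠ f y then 1 else 0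

/-- Spectral norm (ℓ₂ operator norm) of a real matrix. -/
noncomputable def specNorm {m k : Type*} [Fintype m] [Fintype k] [DecidableEq k]
    (M : Matrix m k ℝ) : ℝ :=
  ‖LinearMap.toContinuousLinearMap (Matrix.toEuclideanLin M)‖

/-- Spectral sensitivity of `f`. -/
noncomputable def specSens {n : ℕ} (f : (Fin n → Bool) → Bool) : ℝ :=
  specNorm (adjMat f)

/-- Degree of `f`: minimal total degree of a real polynomial representing `f` on `{0,1}^n`. -/
noncomputable def bdeg {n : ℕ} (f : (Fin n → Bool) → Bool) : ℕ :=
  sInf {d | ∃ p : MvPolynomial (Fin n) ℝ, p.totalDegree = d ∧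
    ∀ x : Fin n → Bool,
      MvPolynomial.eval (fun i => if x i then (1 : ℝ) else 0) p
        = if f x then 1 else 0}

theorem flipBit_flipBit {n : ℕ} (x : Fin n → Bool) (i : Fin n) :
    flipBit (flipBit x i) i = x := by
  simp [flipBit]

theorem adjMat_symm {n : ℕ} (f : (Fin n → Bool) → Bool) (x y : Fin n → Bool) :
    adjMat f x y = adjMat f y x := by
  have key : ∀ a b : Fin n → Bool, (∃ i, b = flipBit a i) → ∃ i, a = flipBit b i := by
    rintro a b ⟨i, rfl⟩
    exact ⟨i, (flipBit_flipBit a i).symm⟩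
  unfold adjMat
  exact if_congr (and_congr ⟨key x y, key y x⟩ ne_comm) rfl rfl

theorem adjMat_nonneg {n : ℕ} (f : (Fin n → Bool) → Bool) (x y : Fin n → Bool) :
    0 ≤ adjMat f x y := by
  unfold adjMat
  split_ifs <;> norm_num

theorem sum_adjMat_le {n : ℕ} (f : (Fin n → Bool) → Bool) (x : Fin n → Bool) :
    ∑ y, adjMat f x y ≤ (sensB f (f x) : ℝ) := by
  have h1 : sensAt f x ≤ sensB f (f x) :=
    Finset.le_sup (f := sensAt f) (Finset.mem_filter.2 ⟨Finset.mem_univ x, rfl⟩)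
  have h2 : (Finset.univ.filter fun y => (∃ i, y = flipBit x i) ∧ f x ≠ f y).card
      ≤ sensAt f x := by
    refine le_trans (Finset.card_le_card ?_) (Finset.card_image_le (f := flipBit x))
    intro y hy
    obtain ⟨⟨i, rfl⟩, hne⟩ := (Finset.mem_filter.1 hy).2
    exact Finset.mem_image.2 ⟨i, Finset.mem_filter.2 ⟨Finset.mem_univ i, hne.symm⟩, rfl⟩
  unfold adjMat
  rw [Finset.sum_boole]
  exact_mod_cast h2.trans h1

/-- The weighted column sums that make the Schur test give the geometric mean. -/
theorem sum_adjMat_mul_sensB_le {n : ℕ} (f : (Fin n → Bool) → Bool) (y : Fin n → Bool) :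
    ∑ x, (sensB f (f x) : ℝ) * adjMat f x y ≤ (sensB f false : ℝ) * (sensB f true : ℝ) := by
  have h : ∀ x, (sensB f (f x) : ℝ) * adjMat f x y
      = (sensB f (!f y) : ℝ) * adjMat f y x := by
    intro x
    rw [adjMat_symm f x y]
    by_cases hxy : f y = f x
    · simp [adjMat, hxy]
    · rw [Bool.eq_not_of_ne (Ne.symm hxy)]
  rw [Finset.sum_congr rfl fun x _ => h x, ← Finset.mul_sum]
  refine (mul_le_mul_of_nonneg_left (sum_adjMat_le f y) (Nat.cast_nonneg _)).trans ?_
  cases f y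
  · exact (mul_comm _ _).le
  · exact le_rfl

theorem sq_sum_adjMat_le {n : ℕ} (f : (Fin n → Bool) → Bool) (v : (Fin n → Bool) → ℝ)
    (x : Fin n → Bool) :
    (∑ y, adjMat f x y * v y) ^ 2
      ≤ (sensB f (f x) : ℝ) * ∑ y, adjMat f x y * v y ^ 2 := by
  have hA := adjMat_nonneg f x
  have h := Finset.sum_sq_le_sum_mul_sum_of_sq_le_mul Finset.univ
    (r := fun y => adjMat f x y * v y) (f := fun y => adjMat f x y)
    (g := fun y => adjMat f x y * v y ^ 2)
    (fun y _ => hA y) (fun y _ => mul_nonneg (hA y) (sq_nonneg _)) (fun y _ => le_of_eq (by ring))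
  exact h.trans (mul_le_mul_of_nonneg_right (sum_adjMat_le f x)
    (Finset.sum_nonneg fun y _ => mul_nonneg (hA y) (sq_nonneg _)))

/-- For every total Boolean function `f`, the spectral sensitivity is at most
the geometric mean of the 0-sensitivity and 1-sensitivity:
`λ(f) ≤ √(s₀(f)·s₁(f))`. -/
theorem specSens_le_sqrt_sens0_sens1 {n : ℕ} (f : (Fin n → Bool) → Bool) :
    specSens f ≤ Real.sqrt ((sensB f false : ℝ) * (sensB f true : ℝ)) := by
  unfold specSens specNorm
  refine ContinuousLinearMap.opNorm_le_bound _ (Real.sqrt_nonneg _) fun v => ?_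
  refine (pow_le_pow_iff_left₀ (norm_nonneg _) (by positivity) two_ne_zero).1 ?_
  rw [mul_pow, Real.sq_sqrt (by positivity), EuclideanSpace.real_norm_sq_eq,
    EuclideanSpace.real_norm_sq_eq]
  calc ∑ x, (Matrix.toEuclideanLin (adjMat f) v) x ^ 2
      = ∑ x, (∑ y, adjMat f x y * v y) ^ 2 := rfl
    _ ≤ ∑ x, (sensB f (f x) : ℝ) * ∑ y, adjMat f x y * v y ^ 2 :=
        Finset.sum_le_sum fun x _ => sq_sum_adjMat_le f v x
    _ = ∑ y, (∑ x, (sensB f (f x) : ℝ) * adjMat f x y) * v y ^ 2 := by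
        simp only [Finset.mul_sum, Finset.sum_mul, mul_assoc]
        exact Finset.sum_comm
    _ ≤ ∑ y, ((sensB f false : ℝ) * (sensB f true : ℝ)) * v y ^ 2 :=
        Finset.sum_le_sum fun y _ =>
          mul_le_mul_of_nonneg_right (sum_adjMat_mul_sensB_le f y) (sq_nonneg _)
    _ = _ := (Finset.mul_sum _ _ _).symm
end

section
/- For every total Boolean function f : {0,1}^n → {0,1}, deg(f) ≤ s₀(f)·s₁(f). -/
/-! ### Huang's signed adjacency operator -/

section Huang

variable {ι : Type*}

/-- The parity character of the cube. -/
noncomputable def par (x : Finset ι) : ℝ := ∏ _k ∈ x, (-1)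

lemma par_mul_self (x : Finset ι) : par x * par x = 1 := by
  rw [par, ← Finset.prod_mul_distrib]; simp

/-- Multiplication by the parity character. -/
noncomputable def parMul : (Finset ι → ℝ) →ₗ[ℝ] (Finset ι → ℝ) where
  toFun v x := par x * v x
  map_add' v w := by ext x; simp [mul_add]
  map_smul' c v := by ext x; simp [mul_left_comm]

lemma parMul_parMul (v : Finset ι → ℝ) : parMul (parMul v) = v := by
  ext x; simp [parMul, ← mul_assoc, par_mul_self]

variable [LinearOrder ι]

/-- Both Huang's signs and the parity character are products of signs over the elements of a vertex;
this is how such a product changes along an edge. -/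
lemma prod_symmDiff_singleton (c : ι → ℝ) (x : Finset ι) (i : ι) (hc : c i * c i = 1) :
    ∏ k ∈ symmDiff x {i}, c k = c i * ∏ k ∈ x, c k := by
  by_cases h : i ∈ x
  · have : symmDiff x {i} = x.erase i := by
      ext j; simp only [Finset.mem_symmDiff, Finset.mem_singleton, Finset.mem_erase]
      grind
    rw [this, ← Finset.mul_prod_erase x c h, ← mul_assoc, hc, one_mul]
  · have : symmDiff x {i} = insert i x := by
      ext j; simp only [Finset.mem_symmDiff, Finset.mem_singleton, Finset.mem_insert]
      grind
    rw [this, Finset.prod_insert h]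

/-- Huang's sign on the cube edge in direction `i` at `x`: the parity of the elements of `x` below
`i`. -/
noncomputable def hsign (x : Finset ι) (i : ι) : ℝ := ∏ k ∈ x, if k < i then -1 else 1

lemma hsign_symmDiff (x : Finset ι) (i j : ι) :
    hsign (symmDiff x {i}) j = (if i < j then -1 else 1) * hsign x j :=
  prod_symmDiff_singleton (fun k => if k < j then -1 else 1) x i (by split_ifs <;> norm_num)

lemma abs_hsign (x : Finset ι) (i : ι) : |hsign x i| = 1 := by
  rw [hsign, Finset.abs_prod]
  exact Finset.prod_eq_one fun k _ => by split_ifs <;> simp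

lemma hsign_mul_self (x : Finset ι) (i : ι) : hsign x i * hsign x i = 1 := by
  rw [← abs_mul_abs_self, abs_hsign, one_mul]

lemma par_symmDiff (x : Finset ι) (i : ι) : par (symmDiff x {i}) = - par x := by
  exact (prod_symmDiff_singleton (fun _ : ι => (-1 : ℝ)) x i (by norm_num)).trans (neg_one_mul _)

variable [Fintype ι]

/-- Huang's signed adjacency operator of the cube whose vertices are the subsets of `ι`. -/
noncomputable def huang : (Finset ι → ℝ) →ₗ[ℝ] (Finset ι → ℝ) where
  toFun v x := ∑ i, hsign x i * v (symmDiff x {i})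
  map_add' v w := by ext x; simp [mul_add, Finset.sum_add_distrib]
  map_smul' c v := by ext x; simp [Finset.mul_sum, mul_left_comm]

lemma huang_apply (v : Finset ι → ℝ) (x : Finset ι) :
    huang v x = ∑ i, hsign x i * v (symmDiff x {i}) := rfl

/-- The two paths around each square of the cube carry opposite signs, so only the backtracking
paths contribute to the square of Huang's operator. -/
lemma huang_huang (v : Finset ι → ℝ) : huang (huang v) = (Fintype.card ι : ℝ) • v := by
  ext x
  simp only [huang_apply, Finset.mul_sum, Pi.smul_apply, smul_eq_mul]
  set F : ι → ι → ℝ := fun i j =>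
    hsign x i * (hsign (symmDiff x {i}) j * v (symmDiff (symmDiff x {i}) {j})) with hF
  have h_diag : ∀ i, F i i = v x := fun i => by
    simp only [hF, hsign_symmDiff, lt_irrefl, if_false, one_mul, symmDiff_symmDiff_cancel_right]
    rw [← mul_assoc, hsign_mul_self, one_mul]
  have h_anti : ∀ i j, i ≠ j → F i j = - F j i := fun i j hij => by
    simp only [hF, hsign_symmDiff, symmDiff_right_comm x {i} {j}]
    rcases lt_or_gt_of_ne hij with h | h
    · rw [if_pos h, if_neg h.not_gt]; ring
    · rw [if_neg h.not_gt, if_pos h]; ring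
  have h_sym : ∑ i, ∑ j, (F i j + F j i) = ∑ i : ι, ∑ j : ι, if i = j then 2 * v x else 0 := by
    refine Finset.sum_congr rfl fun i _ => Finset.sum_congr rfl fun j _ => ?_
    split_ifs with h
    · subst h; rw [h_diag]; ring
    · rw [h_anti i j h]; ring
  simp only [Finset.sum_add_distrib] at h_sym
  rw [Finset.sum_comm (f := fun i j => F j i)] at h_sym
  simp only [Finset.sum_ite_eq, Finset.mem_univ, if_true, Finset.sum_const, nsmul_eq_mul,
    Finset.card_univ] at h_sym
  linarith

lemma huang_parMul (v : Finset ι → ℝ) : huang (parMul v) = - parMul (huang v) := by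
  ext x
  simp only [huang_apply, parMul, LinearMap.coe_mk, AddHom.coe_mk, Pi.neg_apply, Finset.mul_sum,
    ← Finset.sum_neg_distrib, par_symmDiff]
  exact Finset.sum_congr rfl fun i _ => by ring

/-! ### The eigenspace at the square root of the dimension -/

/-- The eigenspace of Huang's operator at `√d`, where `d` is the dimension of the cube. -/
noncomputable def hEig (ι : Type*) [Fintype ι] [LinearOrder ι] :
    Submodule ℝ (Finset ι → ℝ) :=
  LinearMap.ker (huang - (√(Fintype.card ι : ℝ)) • LinearMap.id)

lemma mem_hEig (v : Finset ι → ℝ) : v ∈ hEig ι ↔ huang v = (√(Fintype.card ι : ℝ)) • v := by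
  simp [hEig, sub_eq_zero]

/-- Every `v` is a combination of `huang v + √d v`, which lies in the `√d`-eigenspace, and
`huang v - √d v`, which lies in the `-√d`-eigenspace; parity maps the former onto the latter. -/
lemma finrank_hEig (hd : 0 < Fintype.card ι) :
    Fintype.card (Finset ι) ≤ 2 * Module.finrank ℝ (hEig ι) := by
  set s := √(Fintype.card ι : ℝ) with hs
  have h_pos : 0 < s := Real.sqrt_pos.2 (by exact_mod_cast hd)
  have h_sq : s * s = Fintype.card ι := Real.mul_self_sqrt (by positivity)
  have h_top : hEig ι ⊔ (hEig ι).map parMul = ⊤ := by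
    refine eq_top_iff.2 fun v _ => ?_
    have h1 : huang v + s • v ∈ hEig ι := by
      rw [mem_hEig, map_add, map_smul, huang_huang, ← hs, ← h_sq, smul_add, smul_smul, add_comm]
    have h2 : huang v - s • v ∈ (hEig ι).map parMul := by
      refine ⟨parMul (huang v - s • v), ?_, parMul_parMul _⟩
      rw [SetLike.mem_coe, mem_hEig, huang_parMul, ← hs, ← map_smul, ← map_neg, map_sub, map_smul,
        huang_huang, ← h_sq, smul_sub, smul_smul, neg_sub]
    have h3 : v = (2 * s)⁻¹ • (huang v + s • v) + (-(2 * s)⁻¹) • (huang v - s • v) := by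
      ext x
      simp only [Pi.add_apply, Pi.smul_apply, Pi.sub_apply, smul_eq_mul]
      field_simp
      ring
    rw [h3]
    exact Submodule.add_mem_sup (Submodule.smul_mem _ _ h1) (Submodule.smul_mem _ _ h2)
  have h_le := Submodule.finrank_add_le_finrank_add_finrank (hEig ι) ((hEig ι).map parMul)
  rw [h_top, finrank_top, Module.finrank_fintype_fun_eq_card] at h_le
  have := Submodule.finrank_map_le (parMul (ι := ι)) (hEig ι)
  omega

lemma exists_hEig_supported (hd : 0 < Fintype.card ι) (S : Finset (Finset ι))
    (hS : Fintype.card (Finset ι) < 2 * S.card) :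
    ∃ v ∈ hEig ι, v ≠ 0 ∧ ∀ x ∉ S, v x = 0 := by
  let R : hEig ι →ₗ[ℝ] ({x // x ∈ Sᶜ} → ℝ) :=
    (LinearMap.funLeft ℝ ℝ (Subtype.val : {x // x ∈ Sᶜ} → Finset ι)).comp (hEig ι).subtype
  have h_lt : Module.finrank ℝ ({x // x ∈ Sᶜ} → ℝ) < Module.finrank ℝ (hEig ι) := by
    rw [Module.finrank_fintype_fun_eq_card, Fintype.card_coe, Finset.card_compl]
    have := finrank_hEig (ι := ι) hd
    have := S.card_le_univ
    omega
  obtain ⟨v, hv, hv0⟩ := (Submodule.ne_bot_iff _).1 (LinearMap.ker_ne_bot_of_finrank_lt h_lt (f := R))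
  refine ⟨v, v.2, by simpa using hv0, fun x hx => ?_⟩
  exact congrFun (LinearMap.mem_ker.1 hv) ⟨x, by simpa using hx⟩

/-- The eigenvalue equation at a point `x` of `S`, estimated when the neighbours of `x` in `S` are
sensitive. -/
lemma sqrt_mul_abs_le (g : Finset ι → Bool) (S : Finset (Finset ι))
    (hS : ∀ x ∈ S, ∀ i, symmDiff x {i} ∈ S → g (symmDiff x {i}) ≠ g x)
    {v : Finset ι → ℝ} (hv : v ∈ hEig ι) (hvS : ∀ x ∉ S, v x = 0) {x : Finset ι} (hx : x ∈ S)
    {a : ℕ} {M : ℝ} (hM : 0 ≤ M)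
    (ha : (Finset.univ.filter fun i => g (symmDiff x {i}) ≠ g x).card ≤ a)
    (h_bd : ∀ y, g y ≠ g x → |v y| ≤ M) :
    √(Fintype.card ι : ℝ) * |v x| ≤ a * M := by
  have h1 : √(Fintype.card ι : ℝ) * v x = ∑ i, hsign x i * v (symmDiff x {i}) := by
    rw [← huang_apply, (mem_hEig v).1 hv]; rfl
  calc √(Fintype.card ι : ℝ) * |v x| = |∑ i, hsign x i * v (symmDiff x {i})| := by
        rw [← h1, abs_mul, abs_of_nonneg (Real.sqrt_nonneg _)]
    _ ≤ ∑ i, |v (symmDiff x {i})| := by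
        refine (Finset.abs_sum_le_sum_abs _ _).trans_eq (Finset.sum_congr rfl fun i _ => ?_)
        rw [abs_mul, abs_hsign, one_mul]
    _ ≤ ∑ i, if g (symmDiff x {i}) ≠ g x then M else 0 := by
        refine Finset.sum_le_sum fun i _ => ?_
        split_ifs with h
        · exact h_bd _ h
        · rw [hvS _ fun h' => h (hS x hx i h'), abs_zero]
    _ = (Finset.univ.filter fun i => g (symmDiff x {i}) ≠ g x).card * M := by
        rw [← Finset.sum_filter, Finset.sum_const, nsmul_eq_mul]
    _ ≤ a * M := by gcongr

/-! ### Functions of full degree -/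

lemma sum_par (hd : 0 < Fintype.card ι) : ∑ x : Finset ι, par x = 0 := by
  obtain ⟨i⟩ := Fintype.card_pos_iff.1 hd
  have h : ∑ x : Finset ι, par (symmDiff x {i}) = ∑ x : Finset ι, par x :=
    Equiv.sum_comp (Function.Involutive.toPerm (fun x : Finset ι => symmDiff x {i})
      fun x => symmDiff_symmDiff_cancel_right _ _) par
  simp only [par_symmDiff, Finset.sum_neg_distrib] at h
  linarith

/-- One of the two classes of `f(x) + |x|` mod 2 (recorded by the sign `e`) contains more than half
of the cube. -/
lemma exists_large_class (hd : 0 < Fintype.card ι) (g : Finset ι → Bool)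
    (hg : ∑ x : Finset ι, par x * (if g x then 1 else 0) ≠ 0) :
    ∃ e : ℝ, Fintype.card (Finset ι) <
      2 * (Finset.univ.filter fun x => par x * (if g x then -1 else 1) = e).card := by
  set w : Finset ι → ℝ := fun x => par x * (if g x then -1 else 1) with hw
  have hw1 : ∀ x, w x = 1 ∨ w x = -1 := fun x => by
    rw [← mul_self_eq_one_iff]
    have := par_mul_self x
    simp only [hw]
    split_ifs <;> linarith
  have h_sum : ∑ x, w x ≠ 0 := by
    have : ∑ x, w x = ∑ x : Finset ι, par x - 2 * ∑ x : Finset ι, par x * (if g x then 1 else 0) := by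
      rw [Finset.mul_sum, ← Finset.sum_sub_distrib]
      refine Finset.sum_congr rfl fun x _ => ?_
      simp only [hw]
      split_ifs <;> ring
    rw [this, sum_par hd]
    intro h
    exact hg (by linarith)
  have h_filter : (Finset.univ.filter fun x => ¬ w x = 1) = Finset.univ.filter fun x => w x = -1 := by
    refine Finset.filter_congr fun x _ => ⟨fun h => (hw1 x).resolve_left h, fun h => ?_⟩
    rw [h]; norm_num
  have h_card := Finset.card_filter_add_card_filter_not (s := Finset.univ) (fun x => w x = 1)
  have h_split := Finset.sum_filter_add_sum_filter_not Finset.univ (fun x => w x = 1) w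
  rw [h_filter] at h_card h_split
  rw [Finset.sum_congr rfl (g := fun _ => (1 : ℝ)) (fun x hx => (Finset.mem_filter.1 hx).2),
    Finset.sum_congr rfl (g := fun _ => (-1 : ℝ)) (fun x hx => (Finset.mem_filter.1 hx).2)] at h_split
  simp only [Finset.sum_const, nsmul_eq_mul] at h_split
  have h_ne : (Finset.univ.filter fun x => w x = 1).card ≠
      (Finset.univ.filter fun x => w x = -1).card := by
    intro h
    rw [h] at h_split
    exact h_sum (by rw [← h_split]; ring)
  rw [Finset.card_univ] at h_card
  rcases lt_or_gt_of_ne h_ne with h | h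
  · refine ⟨-1, ?_⟩
    change _ < 2 * (Finset.univ.filter fun x => w x = -1).card
    omega
  · refine ⟨1, ?_⟩
    change _ < 2 * (Finset.univ.filter fun x => w x = 1).card
    omega

/-- If `g` has full degree on the cube, the dimension of the cube is at most the product of the
one-sided sensitivities of `g`. -/
lemma card_le_of_altSum_ne_zero (g : Finset ι → Bool) (s : Bool → ℕ)
    (hs : ∀ x, (Finset.univ.filter fun i => g (symmDiff x {i}) ≠ g x).card ≤ s (g x))
    (hg : ∑ x : Finset ι, par x * (if g x then 1 else 0) ≠ 0) :
    Fintype.card ι ≤ s false * s true := by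
  rcases Nat.eq_zero_or_pos (Fintype.card ι) with h0 | hd
  · omega
  obtain ⟨e, he⟩ := exists_large_class hd g hg
  set S := Finset.univ.filter fun x => par x * (if g x then (-1 : ℝ) else 1) = e with hSdef
  have hS : ∀ x ∈ S, ∀ i, symmDiff x {i} ∈ S → g (symmDiff x {i}) ≠ g x := by
    intro x hx i hi h
    simp only [hSdef, Finset.mem_filter, Finset.mem_univ, true_and, par_symmDiff, h] at hx hi
    have := par_mul_self x
    split_ifs at hx hi <;> nlinarith
  obtain ⟨v, hv, hv0, hvS⟩ := exists_hEig_supported hd S he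
  -- A vertex `x` where `|v|` is maximal, and a vertex `y` where it is maximal among the points with
  -- the opposite value of `g`; the latter may fail to exist.
  obtain ⟨x, -, hx⟩ := Finset.exists_max_image Finset.univ (fun x => |v x|) Finset.univ_nonempty
  have hvx : 0 < |v x| := by
    obtain ⟨z, hz⟩ := Function.ne_iff.1 hv0
    exact (abs_pos.2 hz).trans_le (hx z (Finset.mem_univ _))
  have hxS : x ∈ S := by
    by_contra h
    rw [hvS x h, abs_zero] at hvx
    exact hvx.false
  set r := √(Fintype.card ι : ℝ) with hr
  have h_pos : 0 < r := Real.sqrt_pos.2 (by exact_mod_cast hd)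
  have h_sq : r * r = Fintype.card ι := Real.mul_self_sqrt (by positivity)
  have h_comm : s (g x) * s (!g x) = s false * s true := by
    cases g x <;> simp [mul_comm]
  obtain ⟨M, hM, h_bd, hMle⟩ : ∃ M : ℝ, 0 ≤ M ∧ (∀ y, g y ≠ g x → |v y| ≤ M) ∧
      r * M ≤ s (!g x) * |v x| := by
    by_cases hne : (Finset.univ.filter fun y => g y ≠ g x).Nonempty
    · obtain ⟨y, hy, h_max⟩ := Finset.exists_max_image _ (fun y => |v y|) hne
      have hgy : g y ≠ g x := (Finset.mem_filter.1 hy).2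
      refine ⟨|v y|, abs_nonneg _, fun z hz => h_max z (by simpa using hz), ?_⟩
      by_cases hyS : y ∈ S
      · refine sqrt_mul_abs_le g S hS hv hvS hyS (abs_nonneg _) ?_ fun z _ => hx z (Finset.mem_univ _)
        rw [← Bool.eq_not_of_ne hgy]
        exact hs y
      · rw [hvS y hyS, abs_zero, mul_zero]; positivity
    · refine ⟨0, le_rfl, fun y hy => (hne ⟨y, by simpa using hy⟩).elim, ?_⟩
      rw [mul_zero]; positivity
  have h1 := sqrt_mul_abs_le g S hS hv hvS hxS hM (hs x) h_bd
  rw [← hr] at h1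
  have h2 : (Fintype.card ι : ℝ) * |v x| ≤ (s (g x) * s (!g x) : ℝ) * |v x| := by
    calc (Fintype.card ι : ℝ) * |v x| = r * (r * |v x|) := by rw [← h_sq, mul_assoc]
      _ ≤ r * (s (g x) * M) := by gcongr
      _ = s (g x) * (r * M) := by ring
      _ ≤ s (g x) * (s (!g x) * |v x|) := by gcongr
      _ = _ := by ring
  rw [← h_comm]
  exact_mod_cast le_of_mul_le_mul_right h2 hvx

end Huang

/-! ### Multilinear coefficients and restriction to subcubes -/

/-- The coefficient at `T` of the multilinear polynomial representing the set function `F`. -/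
def mcoef {n : ℕ} (F : Finset (Fin n) → ℝ) (T : Finset (Fin n)) : ℝ :=
  ∑ U ∈ T.powerset, (-1) ^ (T.card + U.card) * F U

lemma mcoef_insert {n : ℕ} (F : Finset (Fin n) → ℝ) {T : Finset (Fin n)} {i : Fin n} (hi : i ∉ T) :
    mcoef F (insert i T) = mcoef (fun U => F (insert i U)) T - mcoef F T := by
  unfold mcoef
  rw [Finset.sum_powerset_insert hi, Finset.card_insert_of_notMem hi, add_comm, sub_eq_add_neg,
    ← Finset.sum_neg_distrib]
  congr 1
  · refine Finset.sum_congr rfl fun U hU => ?_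
    rw [Finset.card_insert_of_notMem fun h => hi (Finset.mem_powerset.1 hU h)]
    ring
  · exact Finset.sum_congr rfl fun U _ => by ring

/-- Möbius inversion on the subsets of `X`. -/
lemma sum_mcoef {n : ℕ} (F : Finset (Fin n) → ℝ) (X : Finset (Fin n)) :
    ∑ T ∈ X.powerset, mcoef F T = F X := by
  induction X using Finset.induction_on generalizing F with
  | empty => simp [mcoef]
  | insert i X hi ih =>
    rw [Finset.sum_powerset_insert hi, ← ih fun U => F (insert i U), ← Finset.sum_add_distrib]
    refine Finset.sum_congr rfl fun T hT => ?_
    rw [mcoef_insert F fun h => hi (Finset.mem_powerset.1 hT h)]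
    ring

/-- The indicator string of a set of coordinates. -/
def ind {n : ℕ} (X : Finset (Fin n)) : Fin n → Bool := fun i => decide (i ∈ X)

lemma flipBit_ind {n : ℕ} (X : Finset (Fin n)) (i : Fin n) :
    flipBit (ind X) i = ind (symmDiff X {i}) := by
  ext j
  by_cases h : j = i
  · subst h; simp [flipBit, ind, Finset.mem_symmDiff]
  · simp [flipBit, ind, Finset.mem_symmDiff, h]

/-- The full-degree bound on the subcube of subsets of `T`, where sensitivities can only decrease. -/
lemma card_le_of_mcoef_ne_zero {n : ℕ} (f : (Fin n → Bool) → Bool) (T : Finset (Fin n))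
    (hT : mcoef (fun X => if f (ind X) then 1 else 0) T ≠ 0) :
    T.card ≤ sensB f false * sensB f true := by
  let m : Finset {i // i ∈ T} → Finset (Fin n) := Finset.map (Function.Embedding.subtype _)
  -- Stated for every instance, since the one coming from the linear order is also needed.
  have hm : ∀ [DecidableEq {i // i ∈ T}] (x : Finset {i // i ∈ T}) (i : {i // i ∈ T}),
      m (symmDiff x {i}) = symmDiff (m x) {i.1} := by
    intro _ x i
    ext j
    simp only [m, Finset.mem_map, Finset.mem_symmDiff, Finset.mem_singleton,
      Function.Embedding.subtype_apply]
    constructor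
    · rintro ⟨k, ⟨hk, hki⟩ | ⟨rfl, hk⟩, rfl⟩
      · exact Or.inl ⟨⟨k, hk, rfl⟩, fun h => hki (Subtype.ext h)⟩
      · refine Or.inr ⟨rfl, ?_⟩
        rintro ⟨l, hl, h⟩
        exact hk (Subtype.ext h ▸ hl)
    · rintro (⟨⟨k, hk, rfl⟩, h⟩ | ⟨rfl, h⟩)
      · exact ⟨k, Or.inl ⟨hk, fun h' => h (by rw [h'])⟩, rfl⟩
      · exact ⟨i, Or.inr ⟨rfl, fun h' => h ⟨i, h', rfl⟩⟩, rfl⟩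
  have h := card_le_of_altSum_ne_zero (fun x => f (ind (m x))) (sensB f) ?_ ?_
  · simpa using h
  · intro x
    refine le_trans ?_ (Finset.le_sup (f := sensAt f) (b := ind (m x)) (by simp))
    refine Finset.card_le_card_of_injOn Subtype.val ?_ Subtype.val_injective.injOn
    intro i hi
    simpa [flipBit_ind, hm] using hi
  · intro h
    apply hT
    have h2 : mcoef (fun X => if f (ind X) then 1 else 0) T = (-1) ^ T.card *
        ∑ x : Finset {i // i ∈ T}, par x * (if f (ind (m x)) then 1 else 0) := by
      rw [mcoef, Finset.mul_sum]
      symm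
      refine Finset.sum_nbij m ?_ ?_ ?_ ?_
      · intro x _
        rw [Finset.mem_powerset]
        exact fun j hj => by
          obtain ⟨k, -, rfl⟩ := Finset.mem_map.1 hj
          exact k.2
      · exact (Finset.map_injective _).injOn
      · intro U hU
        refine ⟨U.subtype (· ∈ T), by simp, ?_⟩
        exact Finset.subtype_map_of_mem fun j hj => Finset.mem_powerset.1 hU hj
      · intro x _
        simp only [m, par, Finset.prod_const, Finset.card_map, pow_add]
        ring
    rw [h2, h, mul_zero]


/-- For every total Boolean function `f`, `deg(f) ≤ s₀(f)·s₁(f)`. -/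
theorem deg_le_sens0_mul_sens1 {n : ℕ} (f : (Fin n → Bool) → Bool) :
    bdeg f ≤ sensB f false * sensB f true := by
  set k := sensB f false * sensB f true with hk
  set c := mcoef (fun X => if f (ind X) then 1 else 0) with hc
  have hc0 : ∀ T, c T ≠ 0 → T.card ≤ k := card_le_of_mcoef_ne_zero f
  let p : MvPolynomial (Fin n) ℝ :=
    ∑ T, MvPolynomial.C (c T) * ∏ i ∈ T, MvPolynomial.X i
  have h_deg : p.totalDegree ≤ k := by
    refine MvPolynomial.totalDegree_finsetSum_le fun T _ => ?_
    by_cases h : c T = 0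
    · simp [h]
    · refine (MvPolynomial.totalDegree_mul _ _).trans ?_
      rw [MvPolynomial.totalDegree_C, zero_add]
      refine (MvPolynomial.totalDegree_finsetProd _ _).trans ?_
      simpa using hc0 T h
  refine le_trans (Nat.sInf_le ⟨p, rfl, fun x => ?_⟩) h_deg
  have hx : ind (Finset.univ.filter fun i => x i = true) = x := by
    ext i; simp [ind]
  have h_inv := sum_mcoef (fun X => if f (ind X) then 1 else 0)
    (Finset.univ.filter fun i => x i = true)
  rw [← hc, hx] at h_inv
  rw [← h_inv]
  simp only [p, map_sum, map_mul, MvPolynomial.eval_C, map_prod, MvPolynomial.eval_X]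
  rw [← Finset.sum_subset (Finset.subset_univ
    (Finset.univ.filter fun i => x i = true).powerset)]
  · refine Finset.sum_congr rfl fun T hT => ?_
    rw [Finset.prod_eq_one, mul_one]
    intro i hi
    simpa using Finset.mem_powerset.1 hT hi
  · intro T _ hT
    obtain ⟨i, hi, hxi⟩ := Finset.not_subset.1 fun h => hT (Finset.mem_powerset.2 h)
    rw [Finset.prod_eq_zero hi, mul_zero]
    simpa using hxi
end

section
/- For every n ≥ 1, Huang's signed hypercube matrix B_n has trace 0, and its eigenvalues are exactly +√n with multiplicity 2^{n−1} and −√n with multiplicity 2^{n−1}. -/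
/-!
Since the off-diagonal blocks are identities, which commute with `HuangB n`, the recursion gives
`HuangB (n + 1) ^ 2 = HuangB n ^ 2 + 1` blockwise, so `HuangB n ^ 2 = n`
(`huangB_mul_self`) and every eigenvalue is a square root of `n`. The diagonal of `HuangB n`
vanishes. For a matrix `A` with `A ^ 2 = s ^ 2` and `s ≠ 0`, the matrix `(1 + s⁻¹ A) / 2` is the
projection onto the `s`-eigenspace along the `-s`-eigenspace; the dimension of the eigenspace is
the trace of this projection, which is half the size of `A` when `A` has trace zero
(`two_mul_finrank_eigenspace`). This is used for both `s = √n` and `s = -√n`.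
-/

/-- Huang's signed adjacency matrix of the `n`-dimensional Boolean hypercube,
defined recursively in 2×2 block form (indexed by the first bit):
`B_0 = [0]`, and `B_n = [[B_{n-1}, I], [I, -B_{n-1}]]`.
In particular `B_1 = [[0,1],[1,0]]`. -/
def HuangB : (n : ℕ) → Matrix (Fin n → Bool) (Fin n → Bool) ℝ
  | 0 => 0
  | (n + 1) => fun x y =>
      if x 0 = y 0 then
        (if x 0 = false then (1 : ℝ) else -1) *
          HuangB n (fun i => x i.succ) (fun i => y i.succ)
      else if (fun i : Fin n => x i.succ) = (fun i : Fin n => y i.succ) then 1 else 0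

lemma huangB_cons (n : ℕ) (a b : Bool) (x y : Fin n → Bool) :
    HuangB (n + 1) (Fin.cons a x) (Fin.cons b y) =
      if a = b then (if a = false then (1 : ℝ) else -1) * HuangB n x y
      else if x = y then 1 else 0 := by
  simp [HuangB]

lemma huangB_apply_self (n : ℕ) (x : Fin n → Bool) : HuangB n x x = 0 := by
  induction n with
  | zero => rfl
  | succ n ih => simp [HuangB, ih]

lemma huangB_mul_self (n : ℕ) : HuangB n * HuangB n = (n : ℝ) • 1 := by
  induction n with
  | zero => simp [HuangB]
  | succ n ih =>
    have ih' (x y : Fin n → Bool) :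
        ∑ z, HuangB n x z * HuangB n z y = if x = y then (n : ℝ) else 0 := by
      rw [← Matrix.mul_apply, ih]
      simp [Matrix.one_apply]
    have hcons (c : Bool) (z : Fin n → Bool) :
        (Fin.consEquiv fun _ : Fin (n + 1) => Bool) (c, z) = Fin.cons c z := rfl
    ext x y
    obtain ⟨⟨a, x⟩, rfl⟩ := (Fin.consEquiv fun _ : Fin (n + 1) => Bool).surjective x
    obtain ⟨⟨b, y⟩, rfl⟩ := (Fin.consEquiv fun _ : Fin (n + 1) => Bool).surjective y
    rw [Matrix.mul_apply, ← (Fin.consEquiv fun _ : Fin (n + 1) => Bool).sum_comp,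
      Fintype.sum_prod_type]
    simp only [hcons, huangB_cons, Matrix.smul_apply, Matrix.one_apply, Fin.cons_inj,
      Fintype.sum_bool]
    cases a <;> cases b <;> simp [ih'] <;> split_ifs <;> simp [add_comm]

/-- A trace-zero square root `A` of the scalar matrix `s ^ 2 ≠ 0` has an `s`-eigenspace of half
the full dimension. -/
lemma two_mul_finrank_eigenspace {ι : Type*} [Fintype ι] [DecidableEq ι] {A : Matrix ι ι ℝ}
    {s : ℝ} (hs : s ≠ 0) (hA : A * A = (s ^ 2) • 1) (htr : A.trace = 0) :
    2 * Module.finrank ℝ (Module.End.eigenspace (Matrix.toLin' A) s) = Fintype.card ι := by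
  have hproj : LinearMap.IsProj (Module.End.eigenspace (Matrix.toLin' A) s)
      (Matrix.toLin' ((2⁻¹ : ℝ) • (1 + s⁻¹ • A))) := by
    constructor
    · intro v
      rw [Module.End.mem_eigenspace_iff, ← Matrix.toLin'_mul_apply, ← LinearMap.smul_apply,
        ← map_smul]
      congr 2
      have hinv : s⁻¹ * s ^ 2 = s := by field_simp
      rw [mul_smul_comm, mul_add, mul_smul_comm, hA, mul_one, smul_smul, hinv, smul_comm s,
        smul_add s, smul_smul s, mul_inv_cancel₀ hs, one_smul, add_comm]
    · intro v hv
      rw [Module.End.mem_eigenspace_iff] at hv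
      simp only [map_smul, map_add, LinearMap.smul_apply, LinearMap.add_apply, hv,
        Matrix.toLin'_one, LinearMap.id_apply, smul_smul, inv_mul_cancel₀ hs]
      module
  have h := hproj.trace
  rw [Matrix.trace_toLin'_eq, Matrix.trace_smul, Matrix.trace_add, Matrix.trace_smul, htr,
    Matrix.trace_one, smul_zero, add_zero, smul_eq_mul] at h
  have h2 : (2 : ℝ) * Module.finrank ℝ (Module.End.eigenspace (Matrix.toLin' A) s)
      = Fintype.card ι := by
    rw [← h]; ring
  exact_mod_cast h2

/-- For every `n ≥ 1`, Huang's signed hypercube matrix `Bₙ` has trace `0`,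
and its eigenvalues are exactly `+√n` and `-√n`, each with multiplicity `2^(n-1)`. -/
theorem huangB_trace_eq_zero_and_eigenvalues (n : ℕ) (hn : 1 ≤ n) :
    (HuangB n).trace = 0 ∧
    Module.finrank ℝ
        (Module.End.eigenspace (Matrix.toLin' (HuangB n)) (Real.sqrt n)) = 2 ^ (n - 1) ∧
    Module.finrank ℝ
        (Module.End.eigenspace (Matrix.toLin' (HuangB n)) (-Real.sqrt n)) = 2 ^ (n - 1) ∧
    ∀ μ : ℝ, Module.End.HasEigenvalue (Matrix.toLin' (HuangB n)) μ →
      μ = Real.sqrt n ∨ μ = -Real.sqrt n := by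
  have htr : (HuangB n).trace = 0 := by simp [Matrix.trace, huangB_apply_self]
  have hsq : Real.sqrt n ^ 2 = n := Real.sq_sqrt n.cast_nonneg
  have hs : Real.sqrt n ≠ 0 := by positivity
  have hcard : Fintype.card (Fin n → Bool) = 2 * 2 ^ (n - 1) := by
    rw [← pow_succ', Nat.sub_add_cancel hn]
    simp
  refine ⟨htr, ?_, ?_, ?_⟩
  · have h := two_mul_finrank_eigenspace hs (by rw [hsq, huangB_mul_self]) htr
    omega
  · have h := two_mul_finrank_eigenspace (neg_ne_zero.mpr hs)
      (by rw [neg_sq, hsq, huangB_mul_self]) htr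
    omega
  · intro μ hμ
    obtain ⟨v, hv⟩ := hμ.exists_hasEigenvector
    have h1 : Matrix.toLin' (HuangB n * HuangB n) v = (μ * μ) • v := by
      rw [Matrix.toLin'_mul_apply, hv.apply_eq_smul, map_smul, hv.apply_eq_smul, smul_smul]
    rw [huangB_mul_self, map_smul, Matrix.toLin'_one, LinearMap.smul_apply,
      LinearMap.id_apply] at h1
    have h2 : (n : ℝ) = μ * μ := smul_left_injective ℝ hv.2 h1
    exact sq_eq_sq_iff_eq_or_eq_neg.mp (by rw [hsq, h2, sq])
end
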